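/- arXiv:2010.04076 — 3 statements merged into one kernel-verified Lean document; each statement's English description precedes it below -/
import Mathlib

section
/- For every x ∈ ℝ^{q+1}, every w ∈ [0,1], every a > 0, and every c ∈ ℝ, the rearrangement test is location–scale invariant: φ(a(x − c·1_{q+1}), w) = φ(x, w), where 1_{q+1} ∈ ℝ^{q+1} is the vector of ones. -/
/-!
Writing `S = S(x, w)`, the shift by `c` cancels against the control mean, so
`S(a(x - c), w) = a S(x, w)` (`Svec_affine`). A permutation sorting `S` also sorts `a S` when
`a > 0`, so the decreasing rearrangement is positively homogeneous (`rearr_smul`), and `T` is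
linear (`Tstat_smul`). Hence both sides of the equation defining the test are multiplied by
`a ≠ 0`, which leaves its truth value unchanged.
-/

open MeasureTheory ProbabilityTheory Filter Set

noncomputable section

/-- Standard normal cumulative distribution function `Φ`. -/
def Phi (x : ℝ) : ℝ := ((gaussianReal 0 1) (Set.Iic x)).toReal

/-- Standard normal density `ϕ`. -/
def stdNormalPDF (y : ℝ) : ℝ := gaussianPDFReal 0 1 y

/-- Mean of the `q` control coordinates of `x = (x₁, x₀₁, …, x₀q)`. -/
def xbar (q : ℕ) (x : Fin (q + 1) → ℝ) : ℝ := (∑ k : Fin q, x k.succ) / q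

/-- The weighted, recentered vector `S(x, w)`. -/
def Svec (q : ℕ) (w : ℝ) (x : Fin (q + 1) → ℝ) : Fin (q + 2) → ℝ := fun j =>
  if j.val = 0 then (1 + w) * (x 0 - xbar q x)
  else if j.val = 1 then (1 - w) * (x 0 - xbar q x)
  else x ⟨j.val - 1, by have := j.isLt; omega⟩ - xbar q x

/-- The decreasing rearrangement `s^▽` of a tuple `s`. -/
def rearr {n : ℕ} (s : Fin n → ℝ) : Fin n → ℝ := fun i => (s ∘ Tuple.sort s) i.rev

/-- The difference-of-means statistic `T(s)`. -/
def Tstat (q : ℕ) (s : Fin (q + 2) → ℝ) : ℝ :=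
  (s 0 + s 1) / 2 - (∑ k : Fin q, s ⟨k.val + 2, by have := k.isLt; omega⟩) / q

/-- The rearrangement test `φ(x, w) = 1{T(S(x,w)) = T(S(x,w)^▽)}`. -/
def phiTest (q : ℕ) (x : Fin (q + 1) → ℝ) (w : ℝ) : ℝ :=
  if Tstat q (Svec q w x) = Tstat q (rearr (Svec q w x)) then 1 else 0

/-- The size bound `ξ_q(w, ρ)`. -/
def xiBound (q : ℕ) (w ρ : ℝ) : ℝ :=
  (1 / 2) ^ (q + 1)
    + (∫ y in Set.Ioi (0 : ℝ), (Phi ((1 - w) * ρ * y)) ^ (q - 1) * stdNormalPDF y)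
    + sInf ((fun t : ℝ => Phi (Real.sqrt ((q : ℝ) - 1) * w * t) ^ (q - 1)
        + 2 * Phi (-(q : ℝ) * t)) '' Set.Ioi 0)

/-- The lower bound on power from Proposition 1. -/
def powerBound (q : ℕ) (w δ σ : ℝ) (σs : Fin q → ℝ) : ℝ :=
  2 ^ q * sSup ((fun t : ℝ => Phi (δ / σ - ((1 + w) / (1 - w)) * t) *
      ∏ k : Fin q, (Phi ((σ / σs k) * t) - 1 / 2)) '' Set.Ici 0)

lemma xbar_affine (q : ℕ) (hq : q ≠ 0) (x : Fin (q + 1) → ℝ) (a c : ℝ) :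
    xbar q (fun i => a * (x i - c)) = a * (xbar q x - c) := by
  have hq' : (q : ℝ) ≠ 0 := Nat.cast_ne_zero.mpr hq
  simp only [xbar, ← Finset.mul_sum, Finset.sum_sub_distrib, Finset.sum_const,
    Finset.card_univ, Fintype.card_fin, nsmul_eq_mul]
  field_simp

lemma Svec_affine (q : ℕ) (hq : q ≠ 0) (w : ℝ) (x : Fin (q + 1) → ℝ) (a c : ℝ) :
    Svec q w (fun i => a * (x i - c)) = fun j => a * Svec q w x j := by
  funext j
  simp only [Svec, xbar_affine q hq]
  split_ifs <;> ring

lemma rearr_smul {n : ℕ} (s : Fin n → ℝ) {a : ℝ} (ha : 0 < a) :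
    rearr (fun j => a * s j) = fun j => a * rearr s j := by
  have hmono : Monotone ((fun j => a * s j) ∘ Tuple.sort s) := fun i j hij =>
    mul_le_mul_of_nonneg_left (Tuple.monotone_sort s hij) ha.le
  -- Two monotone rearrangements of the same tuple coincide, even if the permutations differ.
  have h := Tuple.unique_monotone (Tuple.monotone_sort fun j => a * s j) hmono
  funext i
  exact congrFun h i.rev

lemma Tstat_smul (q : ℕ) (s : Fin (q + 2) → ℝ) (a : ℝ) :
    Tstat q (fun j => a * s j) = a * Tstat q s := by
  simp only [Tstat, ← Finset.mul_sum]
  ring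

/-- location-scale invariance of the rearrangement test. -/
theorem statement1 (q : ℕ) (hq : 2 ≤ q) (x : Fin (q + 1) → ℝ) (w : ℝ)
    (hw : w ∈ Set.Icc (0 : ℝ) 1) (a : ℝ) (ha : 0 < a) (c : ℝ) :
    phiTest q (fun i => a * (x i - c)) w = phiTest q x w := by
  simp only [phiTest, Svec_affine q (by omega : q ≠ 0), rearr_smul _ ha, Tstat_smul,
    mul_right_inj' ha.ne']
end
end

section
/- (Proposition 1, properties of the power bound.) Let q ≥ 2, w ∈ (0,1), and σ, σ_1, …, σ_q > 0. For δ > 0 define B(δ) = 2^q · sup_{t ≥ 0} Φ(δ/σ − ((1+w)/(1−w)) t) ∏_{k=1}^q (Φ((σ/σ_k) t) − 1/2). Then: (i) for every δ > 0 the supremum is attained at some t ∈ (0,∞); (ii) B(δ) > 0 for every δ > 0; and (iii) B(δ) → 1 as δ → ∞. -/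
/-!
The standard normal distribution function `Φ` is continuous and strictly increasing, with limits
`0` and `1` at `∓∞` and `Φ 0 = 1/2` by symmetry. Write the objective as
`f s t = Φ (s - c t) * ∏ k, (Φ (a k * t) - 1/2)` with `s = δ/σ`, `c = (1+w)/(1-w) > 0` and
`a k = σ/σ_k > 0`. It vanishes at `t = 0` (as `q > 0`), is positive for `t > 0`, and tends to `0`
as `t → ∞` because the product is bounded by `(1/2)^q` and the first factor vanishes in the limit.
The extreme value theorem on the closed half-line then gives a maximizer, which is not `0`; its
value is the supremum, so the bound is positive.

For the limit `δ → ∞`, each of the `q` factors is at most `1/2`, so `B ≤ 1`; evaluating the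
objective at `t = s/(2c)`, where both arguments of `Φ` tend to `∞`, gives a lower bound for `B`
that tends to `1`.
-/

open MeasureTheory ProbabilityTheory Filter Set

noncomputable section

lemma Phi_eq_cdf (x : ℝ) : Phi x = cdf (gaussianReal 0 1) x := by
  rw [cdf_eq_real]; rfl

lemma Phi_nonneg (x : ℝ) : 0 ≤ Phi x := ENNReal.toReal_nonneg

lemma Phi_le_one (x : ℝ) : Phi x ≤ 1 := by
  rw [Phi_eq_cdf]; exact cdf_le_one _ _

lemma Phi_tendsto_atBot : Tendsto Phi atBot (nhds 0) := by
  rw [funext Phi_eq_cdf]; exact tendsto_cdf_atBot _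

lemma Phi_tendsto_atTop : Tendsto Phi atTop (nhds 1) := by
  rw [funext Phi_eq_cdf]; exact tendsto_cdf_atTop _

/-- A jump of the distribution function would be an atom of the Gaussian measure. -/
lemma Phi_continuous : Continuous Phi := by
  rw [funext Phi_eq_cdf, continuous_iff_continuousAt]
  intro x
  have : NullSingletonClass (gaussianReal 0 1) := nullSingletonClass_gaussianReal one_ne_zero
  have h := (cdf (gaussianReal 0 1)).measure_singleton x
  rw [measure_cdf, measure_singleton, eq_comm, ENNReal.ofReal_eq_zero] at h
  rw [(monotone_cdf _).continuousAt_iff_leftLim_eq_rightLim, StieltjesFunction.rightLim_eq]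
  exact le_antisymm ((monotone_cdf _).leftLim_le le_rfl) (by linarith)

/-- Strict monotonicity holds because the Gaussian measure charges every nonempty open interval. -/
lemma Phi_strictMono : StrictMono Phi := by
  intro x y hxy
  have : (gaussianReal 0 1).IsOpenPosMeasure :=
    (gaussianReal_absolutelyContinuous' 0 one_ne_zero).isOpenPosMeasure
  have h := (cdf (gaussianReal 0 1)).measure_Ioc x y
  rw [measure_cdf] at h
  have hpos : 0 < gaussianReal 0 1 (Ioc x y) :=
    (isOpen_Ioo.measure_pos _ (nonempty_Ioo.2 hxy)).trans_le (measure_mono Ioo_subset_Ioc_self)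
  rw [h, ENNReal.ofReal_pos] at hpos
  rw [Phi_eq_cdf, Phi_eq_cdf]
  linarith

lemma Phi_pos (x : ℝ) : 0 < Phi x :=
  (Phi_nonneg (x - 1)).trans_lt (Phi_strictMono (by linarith))

/-- The half-lines `(-∞, 0]` and `[0, ∞)` have equal mass by symmetry, and their masses add up
to `1` since `{0}` is null. -/
lemma Phi_zero : Phi 0 = 1 / 2 := by
  have : NullSingletonClass (gaussianReal 0 1) := nullSingletonClass_gaussianReal one_ne_zero
  have hsymm : (gaussianReal 0 1).real (Ioi 0) = (gaussianReal 0 1).real (Iic 0) := by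
    have hmap : (gaussianReal 0 1).map (fun x ↦ -x) = gaussianReal 0 1 := by
      rw [gaussianReal_map_neg, neg_zero]
    conv_lhs => rw [← hmap]
    rw [map_measureReal_apply measurable_neg measurableSet_Ioi,
      ← measureReal_congr (Iio_ae_eq_Iic (μ := gaussianReal 0 1) (a := (0 : ℝ)))]
    congr 1
    ext x
    simp
  have hsum := probReal_compl_eq_one_sub (μ := gaussianReal 0 1) (measurableSet_Iic (a := (0 : ℝ)))
  rw [compl_Iic, hsymm] at hsum
  change (gaussianReal 0 1).real (Iic 0) = 1 / 2
  linarith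

/-- The objective function of the power bound, with `s = δ/σ`, `c = (1+w)/(1-w)` and
`a k = σ/σ_k`. -/
def objective {q : ℕ} (c : ℝ) (a : Fin q → ℝ) (s t : ℝ) : ℝ :=
  Phi (s - c * t) * ∏ k : Fin q, (Phi (a k * t) - 1 / 2)

section Objective

variable {q : ℕ} {c : ℝ} {a : Fin q → ℝ}

lemma factor_nonneg (ha : ∀ k, 0 < a k) {t : ℝ} (ht : 0 ≤ t) (k : Fin q) :
    0 ≤ Phi (a k * t) - 1 / 2 := by
  have := Phi_strictMono.monotone (mul_nonneg (ha k).le ht)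
  rw [Phi_zero] at this
  linarith

lemma prod_le (ha : ∀ k, 0 < a k) {t : ℝ} (ht : 0 ≤ t) :
    ∏ k : Fin q, (Phi (a k * t) - 1 / 2) ≤ (1 / 2) ^ q := by
  calc ∏ k : Fin q, (Phi (a k * t) - 1 / 2) ≤ ∏ _k : Fin q, (1 / 2 : ℝ) :=
        Finset.prod_le_prod (fun k _ ↦ factor_nonneg ha ht k)
          (fun k _ ↦ by linarith [Phi_le_one (a k * t)])
    _ = (1 / 2) ^ q := by simp

lemma objective_pos (ha : ∀ k, 0 < a k) (s : ℝ) {t : ℝ} (ht : 0 < t) :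
    0 < objective c a s t := by
  refine mul_pos (Phi_pos _) (Finset.prod_pos fun k _ ↦ ?_)
  have := Phi_strictMono (mul_pos (ha k) ht)
  rw [Phi_zero] at this
  linarith

lemma objective_zero (hq : 0 < q) (s : ℝ) : objective c a s 0 = 0 := by
  have : NeZero q := ⟨hq.ne'⟩
  simp [objective, Phi_zero, hq.ne']

lemma objective_le_Phi (ha : ∀ k, 0 < a k) (s : ℝ) {t : ℝ} (ht : 0 ≤ t) :
    objective c a s t ≤ Phi (s - c * t) :=
  mul_le_of_le_one_right (Phi_nonneg _)
    ((prod_le ha ht).trans (pow_le_one₀ (by norm_num) (by norm_num)))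

lemma objective_le (ha : ∀ k, 0 < a k) (s : ℝ) {t : ℝ} (ht : 0 ≤ t) :
    objective c a s t ≤ (1 / 2) ^ q :=
  (mul_le_of_le_one_left (Finset.prod_nonneg fun k _ ↦ factor_nonneg ha ht k)
    (Phi_le_one _)).trans (prod_le ha ht)

lemma objective_continuous (s : ℝ) : Continuous (objective c a s) := by
  have := Phi_continuous
  unfold objective
  fun_prop

/-- The objective has an interior maximizer on `[0, ∞)`: it is positive at `1`, zero at `0`, and
below its value at `1` near infinity. -/
lemma exists_maximizer (hq : 0 < q) (hc : 0 < c) (ha : ∀ k, 0 < a k) (s : ℝ) :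
    ∃ t, 0 < t ∧ IsMaxOn (objective c a s) (Ici 0) t := by
  have hpos : 0 < objective c a s 1 := objective_pos ha s one_pos
  have hlim : Tendsto (fun t ↦ Phi (s - c * t)) atTop (nhds 0) :=
    Phi_tendsto_atBot.comp
      (tendsto_atBot_add_const_left atTop s (tendsto_neg_atTop_atBot.comp
        (tendsto_id.const_mul_atTop hc)))
  have hev : ∀ᶠ t in cocompact ℝ ⊓ 𝓟 (Ici 0), objective c a s t ≤ objective c a s 1 := by
    rw [eventually_inf_principal, cocompact_eq_atBot_atTop, eventually_sup]
    constructor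
    · filter_upwards [eventually_lt_atBot 0] with t ht ht'
      exact absurd ht' (not_le.2 ht)
    · filter_upwards [hlim.eventually_lt_const hpos] with t ht ht'
      exact (objective_le_Phi ha s ht').trans ht.le
  obtain ⟨t, ht, hmax⟩ := (objective_continuous s).continuousOn.exists_isMaxOn' isClosed_Ici
    (x₀ := (1 : ℝ)) (mem_Ici.2 zero_le_one) hev
  refine ⟨t, lt_of_le_of_ne ht ?_, hmax⟩
  rintro rfl
  have h1 := hmax (mem_Ici.2 zero_le_one : (1 : ℝ) ∈ Ici 0)
  simp only [mem_ofPred_eq, objective_zero hq] at h1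
  linarith

lemma bddAbove_objective (ha : ∀ k, 0 < a k) (s : ℝ) :
    BddAbove (objective c a s '' Ici 0) := by
  refine ⟨(1 / 2) ^ q, ?_⟩
  rintro _ ⟨t, ht, rfl⟩
  exact objective_le ha s ht

lemma sSup_objective_eq {s t : ℝ} (ht : 0 < t) (hmax : IsMaxOn (objective c a s) (Ici 0) t) :
    objective c a s t = sSup (objective c a s '' Ici 0) := by
  refine (IsGreatest.csSup_eq ⟨mem_image_of_mem _ (mem_Ici.2 ht.le), ?_⟩).symm
  rintro _ ⟨u, hu, rfl⟩
  exact hmax hu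

lemma tendsto_sSup_objective (hc : 0 < c) (ha : ∀ k, 0 < a k) :
    Tendsto (fun s ↦ 2 ^ q * sSup (objective c a s '' Ici 0)) atTop (nhds 1) := by
  have hscale : (2 : ℝ) ^ q * (1 / 2) ^ q = 1 := by rw [← mul_pow]; norm_num
  have hlower : Tendsto (fun s ↦ 2 ^ q * objective c a s (s / (2 * c))) atTop (nhds 1) := by
    have harg : ∀ s, s - c * (s / (2 * c)) = s / 2 := fun s ↦ by field_simp; ring
    have h1 : Tendsto (fun s : ℝ ↦ Phi (s - c * (s / (2 * c)))) atTop (nhds 1) := by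
      simp only [harg]
      exact Phi_tendsto_atTop.comp (tendsto_id.atTop_div_const two_pos)
    have h2 : Tendsto (fun s : ℝ ↦ ∏ k : Fin q, (Phi (a k * (s / (2 * c))) - 1 / 2)) atTop
        (nhds (∏ _k : Fin q, (1 - 1 / 2 : ℝ))) :=
      tendsto_finsetProd _ fun k _ ↦ (Phi_tendsto_atTop.comp
        ((tendsto_id.atTop_div_const (by positivity)).const_mul_atTop (ha k))).sub_const _
    have h3 := (h1.mul h2).const_mul ((2 : ℝ) ^ q)
    have hval : (2 : ℝ) ^ q * (1 * ∏ _k : Fin q, (1 - 1 / 2 : ℝ)) = 1 := by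
      rw [Finset.prod_const, Finset.card_univ, Fintype.card_fin, one_mul,
        show (1 - 1 / 2 : ℝ) = 1 / 2 by norm_num, hscale]
    rw [hval] at h3
    exact h3
  refine tendsto_of_tendsto_of_tendsto_of_le_of_le' hlower tendsto_const_nhds ?_ ?_
  · filter_upwards [eventually_ge_atTop 0] with s hs
    gcongr
    exact le_csSup (bddAbove_objective ha s) (mem_image_of_mem _ (mem_Ici.2 (by positivity)))
  · refine Eventually.of_forall fun s ↦ ?_
    rw [← hscale]
    gcongr
    refine csSup_le (nonempty_Ici.image _) ?_
    rintro _ ⟨t, ht, rfl⟩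
    exact objective_le ha s ht

end Objective

/-- Proposition 1, properties of the power bound: the supremum is
attained at an interior point, the bound is strictly positive, and it tends to
one as `δ → ∞`. -/
theorem statement6 (q : ℕ) (hq : 2 ≤ q) (w : ℝ) (hw : w ∈ Set.Ioo (0 : ℝ) 1)
    (σ : ℝ) (hσ : 0 < σ) (σs : Fin q → ℝ) (hσs : ∀ k, 0 < σs k) :
    (∀ δ : ℝ, 0 < δ → ∃ t ∈ Set.Ioi (0 : ℝ),
      Phi (δ / σ - ((1 + w) / (1 - w)) * t) * ∏ k : Fin q, (Phi ((σ / σs k) * t) - 1 / 2)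
        = sSup ((fun t : ℝ => Phi (δ / σ - ((1 + w) / (1 - w)) * t) *
            ∏ k : Fin q, (Phi ((σ / σs k) * t) - 1 / 2)) '' Set.Ici 0)) ∧
    (∀ δ : ℝ, 0 < δ → 0 < powerBound q w δ σ σs) ∧
    Tendsto (fun δ : ℝ => powerBound q w δ σ σs) atTop (nhds 1) := by
  obtain ⟨hw0, hw1⟩ := hw
  have hc : 0 < (1 + w) / (1 - w) := div_pos (by linarith) (by linarith)
  have ha : ∀ k, 0 < σ / σs k := fun k ↦ div_pos hσ (hσs k)
  have hq0 : 0 < q := by omega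
  refine ⟨fun δ _ ↦ ?_, fun δ _ ↦ ?_, ?_⟩
  · obtain ⟨t, ht, hmax⟩ := exists_maximizer hq0 hc ha (δ / σ)
    exact ⟨t, ht, sSup_objective_eq ht hmax⟩
  · obtain ⟨t, ht, hmax⟩ := exists_maximizer hq0 hc ha (δ / σ)
    refine mul_pos (by positivity) ?_
    exact (objective_pos ha _ ht).trans_eq (sSup_objective_eq ht hmax)
  · exact (tendsto_sSup_objective hc ha).comp (tendsto_id.atTop_div_const hσ)
end
end

section
/- (Theorem 2, asymptotic size with a single treated cluster.) Let q ≥ 2 and let θ̂_n = (θ̂_{n,1}, θ̂_{n,0,1}, …, θ̂_{n,0,q}) be random vectors in ℝ^{q+1}. Let θ_0 ∈ ℝ, σ > 0, and σ_1, …, σ_q ≥ 0 with at most one σ_k = 0, and suppose √n (θ̂_{n,1} − θ_0, θ̂_{n,0,1} − θ_0, …, θ̂_{n,0,q} − θ_0) converges in distribution to the normal law N(0, diag(σ², σ_1², …, σ_q²)) on ℝ^{q+1}. Let 0 < σ_low ≤ σ_high < ∞ be such that σ ≤ σ_high and σ_k ≥ σ_low for at least q−1 of the indices k, and let w ∈ (0,1)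 satisfy ξ_q(w, σ_high/σ_low) ≤ α. Then lim_{n→∞} E φ(θ̂_n, w) exists and is at most α. -/
/-!
The test rejects exactly on the closed polyhedral cone
`A = {x | x_{0,k} ≤ (1 - w) x_1 + w x̄_0 for all k}` (`phiTest_eq_one_iff`): the statistic `T` is an
increasing affine function of `s_1 + s_2` once the total sum is fixed, so it is maximal over all
rearrangements iff the first two entries of `S` are its two largest ones. The cone is invariant
under translations along `(1, …, 1)` and positive scalings, and its boundary has Gaussian measure
zero because `σ > 0`. Hence the portmanteau theorem gives `E φ(θ̂_n, w) → μ(A)`, where `μ` is the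
limiting normal law, and the task is to bound `μ(A)` (`stdPi_rejSet_le`).

Write the limit as `(σ Z, σ_1 G_1, …, σ_q G_q)` with independent standard normal variables, and let
`j` be an index with the smallest `σ_j`. Replacing `σ` by `σ_high` and shrinking the `σ_k` to
`min(σ_k, σ_low)`, one finds on `A` (`rejSet_inclusion`) that either `G_k ≤ 0` for all `k ≠ j`, an
event of probability `2^{-(q-1)}`, or that `N = T Z + (w / q) ∑ s_k G_k` is positive and
`G_k ≤ θ_k N` for all `k ≠ j`. Here `T = (1 - w) σ_high / σ_low`, `s_k = min(σ_k, σ_low) / σ_low`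
and the `θ_k` with `k ≠ j` average to at most one.

The second event is handled in `core_bound`. The residuals of the `G_k` after regression on `N` are
independent of `N` and pairwise negatively correlated, so the probability that they all stay below
given levels is at most the product of the individual probabilities (`stdPi_orthant_le`). The
function `log Φ` is concave (`concaveOn_log_Phi`), so the product over `k ≠ j` is at most
the `(q-1)`-th power of `Φ` at an averaged argument, which the elementary inequality `ratio_le`
bounds by `T z` when `N` equals `z` standard deviations. Integrating over `z > 0` gives the integral
in `ξ_q`, and `2^{-(q-1)}` is at most the infimum in `ξ_q` since `Φ ≥ 1/2` on the positive half-line.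
-/

open MeasureTheory ProbabilityTheory Filter Set

noncomputable section

/-! ### Linear forms of a standard Gaussian vector -/

/-- The law of a vector of independent standard normal variables indexed by `ι`. -/
abbrev stdPi (ι : Type*) [Fintype ι] : Measure (ι → ℝ) :=
  Measure.pi (fun _ : ι => gaussianReal 0 1)

section LinearForms

variable {ι : Type*} [Fintype ι]

lemma memLp_coord (i : ι) : MemLp (fun x : ι → ℝ => x i) 2 (stdPi ι) :=
  (memLp_id_gaussianReal' 2 (by simp)).comp_measurePreserving
    (measurePreserving_eval (fun _ : ι => gaussianReal 0 1) i)

lemma memLp_dot (a : ι → ℝ) : MemLp (fun x : ι → ℝ => a ⬝ᵥ x) 2 (stdPi ι) := by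
  unfold dotProduct
  exact memLp_finsetSum _ fun i _ => (memLp_coord i).const_mul (a i)

lemma iIndepFun_coord : iIndepFun (fun (i : ι) (x : ι → ℝ) => x i) (stdPi ι) :=
  iIndepFun_pi (X := fun _ : ι => (id : ℝ → ℝ)) fun _ => aemeasurable_id

lemma cov_coord [DecidableEq ι] (i j : ι) :
    cov[fun x : ι → ℝ => x i, fun x => x j; stdPi ι] = if i = j then 1 else 0 := by
  split_ifs with h
  · subst h
    rw [covariance_self (memLp_coord i).aemeasurable]
    have := (measurePreserving_eval (fun _ : ι => gaussianReal 0 1) i).variance_fun_comp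
      (f := fun x => x) aemeasurable_id'
    simpa [variance_fun_id_gaussianReal] using this
  · exact (iIndepFun_coord.indepFun h).covariance_eq_zero (memLp_coord i) (memLp_coord j)

lemma cov_dot (a b : ι → ℝ) :
    cov[fun x : ι → ℝ => a ⬝ᵥ x, fun x => b ⬝ᵥ x; stdPi ι] = a ⬝ᵥ b := by
  classical
  unfold dotProduct
  rw [covariance_fun_sum_fun_sum (fun i => (memLp_coord i).const_mul (a i))
    (fun i => (memLp_coord i).const_mul (b i))]
  simp only [covariance_const_mul_left, covariance_const_mul_right, cov_coord]
  simp [mul_comm]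

lemma hasGaussianLaw_stdPi : HasGaussianLaw (fun x : ι → ℝ => x) (stdPi ι) := by
  refine iIndepFun.hasGaussianLaw (X := fun (i : ι) (x : ι → ℝ) => x i) (fun i => ?_)
    iIndepFun_coord
  refine HasLaw.hasGaussianLaw (μ := gaussianReal 0 1)
    ⟨(measurable_pi_apply i).aemeasurable,
      (measurePreserving_eval (fun _ : ι => gaussianReal 0 1) i).map_eq⟩

/-- The linear form with coefficient vector `a`, as a continuous linear map. -/
def dotCLM (a : ι → ℝ) : (ι → ℝ) →L[ℝ] ℝ :=
  ∑ i, a i • ContinuousLinearMap.proj (R := ℝ) (φ := fun _ : ι => ℝ) i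

lemma dotCLM_apply (a x : ι → ℝ) : dotCLM a x = a ⬝ᵥ x := by
  simp [dotCLM, dotProduct]

lemma measurable_dot (a : ι → ℝ) : Measurable (fun x : ι → ℝ => a ⬝ᵥ x) := by
  unfold dotProduct; fun_prop

lemma map_dot (a : ι → ℝ) :
    (stdPi ι).map (fun x => a ⬝ᵥ x) = gaussianReal 0 (a ⬝ᵥ a).toNNReal := by
  have h : HasGaussianLaw (fun x : ι → ℝ => a ⬝ᵥ x) (stdPi ι) := by
    simpa [dotCLM_apply] using hasGaussianLaw_stdPi.map_fun (dotCLM a)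
  rw [h.map_eq_gaussianReal, ← covariance_self (memLp_dot a).aemeasurable, cov_dot]
  congr 1
  unfold dotProduct
  rw [integral_finsetSum _ fun i _ => ((memLp_coord i).const_mul (a i)).integrable (by simp)]
  refine Finset.sum_eq_zero fun i _ => ?_
  rw [integral_const_mul]
  have h2 : ∫ x : ι → ℝ, x i ∂(stdPi ι) = 0 := by
    have e := integral_map (μ := stdPi ι) (φ := fun x : ι → ℝ => x i) (f := fun y : ℝ => y)
      (measurable_pi_apply i).aemeasurable (by fun_prop)
    have e' : (stdPi ι).map (fun x : ι → ℝ => x i) = gaussianReal 0 1 :=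
      (measurePreserving_eval (fun _ : ι => gaussianReal 0 1) i).map_eq
    rw [e', integral_id_gaussianReal] at e
    exact e.symm
  rw [h2, mul_zero]

/-- A linear form is independent of every finite family of linear forms orthogonal to it. -/
lemma indepFun_dot {κ : Type*} [Finite κ] (a : ι → ℝ) (b : κ → ι → ℝ)
    (h : ∀ k, a ⬝ᵥ b k = 0) :
    IndepFun (fun x : ι → ℝ => a ⬝ᵥ x) (fun x k => b k ⬝ᵥ x) (stdPi ι) := by
  cases nonempty_fintype κ
  have key : IndepFun (fun (x : ι → ℝ) (_ : Unit) => a ⬝ᵥ x) (fun x k => b k ⬝ᵥ x) (stdPi ι) := by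
    refine HasGaussianLaw.indepFun_of_covariance_eval
      (X := fun (_ : Unit) (x : ι → ℝ) => a ⬝ᵥ x) (Y := fun k (x : ι → ℝ) => b k ⬝ᵥ x) ?_ ?_
    · have := hasGaussianLaw_stdPi.map_fun
        ((ContinuousLinearMap.pi fun _ : Unit => dotCLM a).prod
          (ContinuousLinearMap.pi fun k => dotCLM (b k)))
      simpa [dotCLM_apply] using this
    · intro _ k
      rw [cov_dot, h]
  exact key.comp (φ := fun f : Unit → ℝ => f ()) (ψ := id) (by fun_prop) measurable_id

lemma lintegral_Iic_le_of_monotone (ν : Measure ℝ) [IsProbabilityMeasure ν] (p : ℝ → ENNReal)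
    (hp : Monotone p) (u : ℝ) :
    ∫⁻ x in Iic u, p x ∂ν ≤ ν (Iic u) * ∫⁻ x, p x ∂ν := by
  have h1 : ν (Iic u) + ν (Ioi u) = 1 := by
    rw [← compl_Iic, measure_add_measure_compl measurableSet_Iic, measure_univ]
  have h2 : ∫⁻ x in Iic u, p x ∂ν ≤ p u * ν (Iic u) := by
    rw [← setLIntegral_const]
    exact setLIntegral_mono' measurableSet_Iic fun x hx => hp hx
  have h3 : p u * ν (Ioi u) ≤ ∫⁻ x in Ioi u, p x ∂ν := by
    rw [← setLIntegral_const]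
    exact setLIntegral_mono' measurableSet_Ioi fun x hx => hp (le_of_lt hx)
  have h4 : ∫⁻ x, p x ∂ν = ∫⁻ x in Iic u, p x ∂ν + ∫⁻ x in Ioi u, p x ∂ν := by
    rw [← compl_Iic, lintegral_add_compl _ measurableSet_Iic]
  calc ∫⁻ x in Iic u, p x ∂ν
      = (ν (Iic u) + ν (Ioi u)) * ∫⁻ x in Iic u, p x ∂ν := by rw [h1, one_mul]
    _ = ν (Iic u) * ∫⁻ x in Iic u, p x ∂ν + ν (Ioi u) * ∫⁻ x in Iic u, p x ∂ν := by ring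
    _ ≤ ν (Iic u) * ∫⁻ x in Iic u, p x ∂ν + ν (Ioi u) * (p u * ν (Iic u)) := by gcongr
    _ = ν (Iic u) * (∫⁻ x in Iic u, p x ∂ν + p u * ν (Ioi u)) := by ring
    _ ≤ ν (Iic u) * ∫⁻ x, p x ∂ν := by rw [h4]; gcongr

/-- Disintegration along a linear form independent of a family of linear forms. -/
lemma stdPi_indep_apply {κ : Type*} [Fintype κ] (a : ι → ℝ) (b : κ → ι → ℝ)
    (h : ∀ k, a ⬝ᵥ b k = 0) (S : Set (ℝ × (κ → ℝ))) (hS : MeasurableSet S) :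
    stdPi ι {x | (a ⬝ᵥ x, fun k => b k ⬝ᵥ x) ∈ S} =
      ∫⁻ s, stdPi ι {x | (s, fun k => b k ⬝ᵥ x) ∈ S} ∂((stdPi ι).map (fun x => a ⬝ᵥ x)) := by
  have ma := measurable_dot a
  have mb : Measurable (fun (x : ι → ℝ) k => b k ⬝ᵥ x) :=
    measurable_pi_lambda _ fun k => measurable_dot (b k)
  have e := (indepFun_iff_map_prod_eq_prod_map_map ma.aemeasurable mb.aemeasurable).1
    (indepFun_dot a b h)
  have : IsProbabilityMeasure ((stdPi ι).map (fun x k => b k ⬝ᵥ x)) :=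
    Measure.isProbabilityMeasure_map mb.aemeasurable
  have e2 : stdPi ι {x | (a ⬝ᵥ x, fun k => b k ⬝ᵥ x) ∈ S}
      = ((stdPi ι).map (fun x => (a ⬝ᵥ x, fun k => b k ⬝ᵥ x))) S := by
    rw [Measure.map_apply (ma.prodMk mb) hS]; rfl
  rw [e2, e, Measure.prod_apply hS]
  refine lintegral_congr fun s => ?_
  rw [Measure.map_apply mb (measurable_prodMk_left hS)]; rfl

/-- Negatively correlated jointly Gaussian variables are negatively lower orthant dependent.
The induction step regresses the remaining forms on the form `b k₀`: given its value, the
conditional probability of the remaining events is increasing in that value. -/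
lemma stdPi_orthant_le {κ : Type*} [Fintype κ] [DecidableEq κ] (b : κ → ι → ℝ) (u : κ → ℝ)
    (hpos : ∀ k, 0 < b k ⬝ᵥ b k) (hneg : ∀ k l, k ≠ l → b k ⬝ᵥ b l ≤ 0) (t : Finset κ) :
    stdPi ι {x | ∀ k ∈ t, b k ⬝ᵥ x ≤ u k} ≤ ∏ k ∈ t, stdPi ι {x | b k ⬝ᵥ x ≤ u k} := by
  induction t using Finset.induction_on with
  | empty => simp
  | insert k₀ t hk ih =>
    rw [Finset.prod_insert hk]
    set β : κ → ℝ := fun l => if l = k₀ then 0 else (b l ⬝ᵥ b k₀) / (b k₀ ⬝ᵥ b k₀) with hβ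
    have hβ0 : ∀ l, β l ≤ 0 := by
      intro l
      simp only [hβ]
      split_ifs with h
      · rfl
      · exact div_nonpos_of_nonpos_of_nonneg (hneg l k₀ h) (hpos k₀).le
    set f : κ → ι → ℝ := fun l => if l = k₀ then 0 else b l - β l • b k₀ with hf
    have horth : ∀ l, b k₀ ⬝ᵥ f l = 0 := by
      intro l
      simp only [hf]
      split_ifs with h
      · simp
      · rw [dotProduct_sub, dotProduct_smul, smul_eq_mul]
        simp only [hβ, if_neg h]
        rw [div_mul_cancel₀ _ (hpos k₀).ne', dotProduct_comm, sub_self]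
    set S : Set (ℝ × (κ → ℝ)) := {z | z.1 ≤ u k₀ ∧ ∀ l ∈ t, z.2 l + β l * z.1 ≤ u l} with hS
    set S' : Set (ℝ × (κ → ℝ)) := {z | ∀ l ∈ t, z.2 l + β l * z.1 ≤ u l} with hS'
    have mS' : MeasurableSet S' := by
      have : S' = ⋂ l ∈ t, {z : ℝ × (κ → ℝ) | z.2 l + β l * z.1 ≤ u l} := by
        ext z; simp [hS']
      rw [this]
      exact Finset.measurableSet_biInter _ fun l _ =>
        measurableSet_le (by fun_prop) measurable_const
    have mS : MeasurableSet S :=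
      (measurableSet_le measurable_fst measurable_const).inter mS'
    have hfl : ∀ l ∈ t, ∀ x : ι → ℝ, f l ⬝ᵥ x + β l * (b k₀ ⬝ᵥ x) = b l ⬝ᵥ x := by
      intro l hl x
      have : l ≠ k₀ := fun h => hk (h ▸ hl)
      simp only [hf, if_neg this]
      rw [sub_dotProduct, smul_dotProduct, smul_eq_mul]; ring
    have eA : {x : ι → ℝ | ∀ k ∈ insert k₀ t, b k ⬝ᵥ x ≤ u k}
        = {x | (b k₀ ⬝ᵥ x, fun k => f k ⬝ᵥ x) ∈ S} := by
      ext x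
      simp only [Finset.mem_insert, forall_eq_or_imp, mem_ofPred_eq, hS]
      refine and_congr_right fun _ => forall₂_congr fun l hl => ?_
      rw [hfl l hl]
    have eB : {x : ι → ℝ | ∀ k ∈ t, b k ⬝ᵥ x ≤ u k}
        = {x | (b k₀ ⬝ᵥ x, fun k => f k ⬝ᵥ x) ∈ S'} := by
      ext x
      simp only [mem_ofPred_eq, hS']
      refine forall₂_congr fun l hl => ?_
      rw [hfl l hl]
    set ν := (stdPi ι).map (fun x => b k₀ ⬝ᵥ x) with hν
    have : IsProbabilityMeasure ν :=
      Measure.isProbabilityMeasure_map (measurable_dot _).aemeasurable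
    set p : ℝ → ENNReal := fun s => stdPi ι {x | (s, fun k => f k ⬝ᵥ x) ∈ S'} with hp
    have hmono : Monotone p := by
      intro s s' hss
      refine measure_mono fun x hx l hl => ?_
      have := hx l hl
      simp only at this ⊢
      nlinarith [hβ0 l]
    have e1 : stdPi ι {x | ∀ k ∈ insert k₀ t, b k ⬝ᵥ x ≤ u k} = ∫⁻ s in Iic (u k₀), p s ∂ν := by
      rw [eA, stdPi_indep_apply _ _ horth S mS, ← lintegral_indicator measurableSet_Iic]
      refine lintegral_congr fun s => ?_
      by_cases hs : s ≤ u k₀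
      · rw [indicator_of_mem (by exact hs)]
        simp [hp, hS, hS', hs]
      · rw [indicator_of_notMem (by exact hs)]
        simp [hS, hs]
    have e2 : stdPi ι {x | ∀ k ∈ t, b k ⬝ᵥ x ≤ u k} = ∫⁻ s, p s ∂ν := by
      rw [eB, stdPi_indep_apply _ _ horth S' mS']
    have e3 : stdPi ι {x | b k₀ ⬝ᵥ x ≤ u k₀} = ν (Iic (u k₀)) := by
      rw [hν, Measure.map_apply (measurable_dot _) measurableSet_Iic]; rfl
    rw [e1, e3]
    refine (lintegral_Iic_le_of_monotone ν p hmono _).trans ?_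
    rw [← e2]
    gcongr

end LinearForms

/-! ### The standard normal distribution function -/

lemma Phi_eq_integral (x : ℝ) : Phi x = ∫ y in Iic x, gaussianPDFReal 0 1 y := by
  unfold Phi
  rw [gaussianReal_apply_eq_integral _ one_ne_zero, ENNReal.toReal_ofReal]
  exact setIntegral_nonneg measurableSet_Iic fun y _ => gaussianPDFReal_nonneg 0 1 y

lemma ofReal_Phi (x : ℝ) : ENNReal.ofReal (Phi x) = gaussianReal 0 1 (Iic x) :=
  ENNReal.ofReal_toReal (measure_ne_top _ _)

lemma Phi_mono : Monotone Phi := fun _ _ h =>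
  ENNReal.toReal_mono (measure_ne_top _ _) (measure_mono (Iic_subset_Iic.2 h))

lemma gaussianPDFReal_std (x : ℝ) :
    gaussianPDFReal 0 1 x = (√(2 * Real.pi))⁻¹ * Real.exp (-x ^ 2 / 2) := by
  simp [gaussianPDFReal]

lemma hasDerivAt_pdf (x : ℝ) :
    HasDerivAt (gaussianPDFReal 0 1) (-x * gaussianPDFReal 0 1 x) x := by
  have h : HasDerivAt (fun x : ℝ => (√(2 * Real.pi))⁻¹ * Real.exp (-x ^ 2 / 2))
      ((√(2 * Real.pi))⁻¹ * (Real.exp (-x ^ 2 / 2) * (-(2 * x) / 2))) x := by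
    refine HasDerivAt.const_mul _ (HasDerivAt.exp ?_)
    simpa using ((hasDerivAt_pow 2 x).neg.div_const 2)
  have e : gaussianPDFReal 0 1 = fun x : ℝ => (√(2 * Real.pi))⁻¹ * Real.exp (-x ^ 2 / 2) :=
    funext gaussianPDFReal_std
  rw [e]
  convert h using 1
  ring

lemma continuous_pdf : Continuous (gaussianPDFReal 0 1) :=
  continuous_iff_continuousAt.2 fun x => (hasDerivAt_pdf x).continuousAt

lemma hasDerivAt_Phi (x : ℝ) : HasDerivAt Phi (gaussianPDFReal 0 1 x) x := by
  have hInt : ∀ s, IntegrableOn (gaussianPDFReal 0 1) s := fun s =>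
    (integrable_gaussianPDFReal 0 1).integrableOn
  have e : Phi = fun x => (∫ y in (0 : ℝ)..x, gaussianPDFReal 0 1 y) + Phi 0 := by
    funext x
    rw [Phi_eq_integral, Phi_eq_integral, intervalIntegral.integral_Iic_sub_Iic (hInt _) (hInt _)
      |>.symm]
    ring
  rw [e]
  exact (intervalIntegral.integral_hasDerivAt_right
    ((integrable_gaussianPDFReal 0 1).intervalIntegrable)
    (continuous_pdf.stronglyMeasurableAtFilter _ _) continuous_pdf.continuousAt).add_const _

lemma tendsto_pdf_atBot : Tendsto (gaussianPDFReal 0 1) atBot (nhds 0) := by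
  have h : Tendsto (fun x : ℝ => -x ^ 2 / 2) atBot atBot := by
    have : Tendsto (fun x : ℝ => x ^ 2 / 2) atBot atTop :=
      (((tendsto_pow_atTop two_ne_zero).comp tendsto_neg_atBot_atTop).congr
        fun x => by simp).atTop_div_const (by norm_num)
    refine (tendsto_neg_atTop_atBot.comp this).congr fun x => ?_
    simp only [Function.comp_apply]; ring
  have h2 := (Real.tendsto_exp_atBot.comp h).const_mul ((√(2 * Real.pi))⁻¹)
  rw [mul_zero] at h2
  exact h2.congr fun x => (gaussianPDFReal_std x).symm

/-- The elementary Mills ratio bound, which gives log-concavity of `Phi`. For negative `x` the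
function `y ↦ x Φ(y) + ϕ(y)` vanishes at `-∞` and has the nonnegative derivative `(x - y) ϕ(y)` on
`(-∞, x]`. -/
lemma mills_nonneg (x : ℝ) : 0 ≤ x * Phi x + gaussianPDFReal 0 1 x := by
  rcases le_or_gt 0 x with hx | hx
  · exact add_nonneg (mul_nonneg hx (Phi_nonneg x)) (gaussianPDFReal_nonneg 0 1 x)
  · set F : ℝ → ℝ := fun y => x * Phi y + gaussianPDFReal 0 1 y with hF
    have hd : ∀ y, HasDerivAt F ((x - y) * gaussianPDFReal 0 1 y) y := by
      intro y
      exact (((hasDerivAt_Phi y).const_mul x).add (hasDerivAt_pdf y)).congr_deriv (by ring)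
    have hmono : MonotoneOn F (Iic x) := by
      refine monotoneOn_of_deriv_nonneg (convex_Iic x)
        (fun y _ => (hd y).continuousAt.continuousWithinAt)
        (fun y _ => (hd y).differentiableAt.differentiableWithinAt) fun y hy => ?_
      rw [(hd y).deriv]
      rw [interior_Iic] at hy
      exact mul_nonneg (sub_nonneg.2 (le_of_lt hy)) (gaussianPDFReal_nonneg 0 1 y)
    have hlim : Tendsto F atBot (nhds 0) := by
      have h1 : Tendsto Phi atBot (nhds 0) :=
        (tendsto_cdf_atBot (gaussianReal 0 1)).congr fun y => cdf_eq_real _ y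
      simpa using (h1.const_mul x).add tendsto_pdf_atBot
    refine le_of_tendsto hlim ?_
    filter_upwards [eventually_le_atBot x] with y hy
    exact hmono hy (mem_Iic.2 le_rfl) hy

lemma concaveOn_log_Phi : ConcaveOn ℝ univ (fun x => Real.log (Phi x)) := by
  have hd : ∀ x, HasDerivAt (fun x => Real.log (Phi x)) (gaussianPDFReal 0 1 x / Phi x) x :=
    fun x => (hasDerivAt_Phi x).log (Phi_pos x).ne'
  refine Antitone.concaveOn_univ_of_deriv (fun x => (hd x).differentiableAt) ?_
  have e : deriv (fun x => Real.log (Phi x)) = fun x => gaussianPDFReal 0 1 x / Phi x :=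
    funext fun x => (hd x).deriv
  rw [e]
  have hd2 : ∀ x, HasDerivAt (fun x => gaussianPDFReal 0 1 x / Phi x)
      ((-x * gaussianPDFReal 0 1 x * Phi x - gaussianPDFReal 0 1 x * gaussianPDFReal 0 1 x)
        / Phi x ^ 2) x :=
    fun x => (hasDerivAt_pdf x).div (hasDerivAt_Phi x) (Phi_pos x).ne'
  refine antitone_of_deriv_nonpos (fun x => (hd2 x).differentiableAt) fun x => ?_
  rw [(hd2 x).deriv]
  refine div_nonpos_of_nonpos_of_nonneg ?_ (sq_nonneg _)
  nlinarith [mul_nonneg (gaussianPDFReal_nonneg 0 1 x) (mills_nonneg x)]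

/-- The Jensen inequality for `log Φ`. -/
lemma prod_Phi_le {κ : Type*} (t : Finset κ) (y : κ → ℝ) (m : ℝ)
    (h : ∑ k ∈ t, y k ≤ t.card * m) : ∏ k ∈ t, Phi (y k) ≤ Phi m ^ t.card := by
  rcases t.eq_empty_or_nonempty with rfl | ht
  · simp
  have hc : (0 : ℝ) < t.card := by exact_mod_cast ht.card_pos
  have hj := concaveOn_log_Phi.le_map_sum (t := t) (w := fun _ => (t.card : ℝ)⁻¹) (p := y)
    (fun _ _ => by positivity) (by simp [hc.ne']) (fun _ _ => mem_univ _)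
  simp only [smul_eq_mul, ← Finset.mul_sum] at hj
  have hle : (t.card : ℝ)⁻¹ * ∑ k ∈ t, y k ≤ m := by
    rw [inv_mul_le_iff₀ hc]; exact h
  have h2 := hj.trans (Real.log_le_log (Phi_pos _) (Phi_mono hle))
  rw [inv_mul_le_iff₀ hc] at h2
  rw [← Real.log_le_log_iff (Finset.prod_pos fun k _ => Phi_pos _) (pow_pos (Phi_pos _) _),
    Real.log_prod (fun k _ => (Phi_pos _).ne'), Real.log_pow]
  exact h2

lemma gaussianReal_Iic_scale {s : ℝ} (hs : 0 < s) (u : ℝ) :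
    gaussianReal 0 (s ^ 2).toNNReal (Iic u) = ENNReal.ofReal (Phi (u / s)) := by
  have h := gaussianReal_map_const_mul (μ := 0) (v := 1) s
  have e : NNReal.mk (s ^ 2) (sq_nonneg s) * 1 = (s ^ 2).toNNReal := by
    ext; simp [Real.coe_toNNReal _ (sq_nonneg s)]
  rw [mul_zero, e] at h
  rw [← h, Measure.map_apply (by fun_prop) measurableSet_Iic, ofReal_Phi]
  congr 1
  ext x
  simp [le_div_iff₀ hs, mul_comm]

/-! ### The bound on the main event -/

lemma ratio_le {T c D : ℝ} (hT : 0 < T) (hc0 : 0 < c) (hc1 : c ≤ 1) (hDc : D ≤ c)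
    (hV : c ^ 2 < T ^ 2 + D) : (T ^ 2 + D - c) / √(T ^ 2 + D - c ^ 2) ≤ T := by
  have hR : 0 < T ^ 2 + D - c ^ 2 := by linarith
  rw [div_le_iff₀ (Real.sqrt_pos.2 hR)]
  rcases le_or_gt (T ^ 2 + D - c) 0 with h | h
  · exact h.trans (by positivity)
  · have e : T * √(T ^ 2 + D - c ^ 2) = √(T ^ 2 * (T ^ 2 + D - c ^ 2)) := by
      rw [Real.sqrt_mul (sq_nonneg T), Real.sqrt_sq hT.le]
    rw [e]
    refine Real.le_sqrt_of_sq_le ?_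
    -- with `δ = c - D` this is `δ² ≤ T² (δ + c - c²)`, where `0 ≤ δ ≤ T²`
    have h1 : (c - D) * (c - D) ≤ T ^ 2 * (c - D) :=
      mul_le_mul_of_nonneg_right (by linarith) (by linarith)
    have h2 : 0 ≤ T ^ 2 * (c - c ^ 2) := mul_nonneg (sq_nonneg T) (by nlinarith)
    nlinarith

lemma gaussianReal_eq_map {V : ℝ} (hV : 0 ≤ V) :
    gaussianReal 0 V.toNNReal = (gaussianReal 0 1).map (fun z => √V * z) := by
  have h := gaussianReal_map_const_mul (μ := 0) (v := 1) (√V)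
  have e : NNReal.mk (√V ^ 2) (sq_nonneg (√V)) * 1 = V.toNNReal := by
    ext; simp [Real.sq_sqrt hV, hV]
  rw [mul_zero, e] at h
  exact h.symm

/-- Coefficients of the linear form `T Z + (w / q) ∑ s_k G_k` in `(Z, G_1, …, G_q)`. -/
def formN (q : ℕ) (T w : ℝ) (s : Fin q → ℝ) : Fin (q + 1) → ℝ :=
  Fin.cons T (fun k => w / q * s k)

/-- The probability that `N = T Z + (w / q) ∑ s_k G_k` is positive and exceeds, after the rescaling
`θ`, all `G_k` with `k ≠ j`. Regressing the `G_k` on `N` leaves residuals that are independent of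
`N` and pairwise negatively correlated, so that conditionally on `N` the probability is at most a
product of values of `Φ`, which log-concavity of `Φ` merges into a single power. -/
lemma core_bound (q : ℕ) (hq : 2 ≤ q) (j : Fin q) (T w : ℝ) (hT : 0 < T) (hw0 : 0 < w)
    (hw1 : w < 1) (s : Fin q → ℝ) (hs0 : ∀ k, 0 ≤ s k) (hs1 : ∀ k, s k ≤ 1)
    (hsj : ∀ k, k ≠ j → s k = 1) (θ : Fin q → ℝ)
    (hθ : ∑ k : {k : Fin q // k ≠ j}, θ k ≤ (q : ℝ) - 1) :
    stdPi (Fin (q + 1)) {g | 0 < formN q T w s ⬝ᵥ g ∧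
        ∀ k : {k : Fin q // k ≠ j}, g k.1.succ ≤ θ k * (formN q T w s ⬝ᵥ g)} ≤
      ∫⁻ z in Ioi 0, ENNReal.ofReal (Phi (T * z) ^ (q - 1)) ∂(gaussianReal 0 1) := by
  classical
  set a := formN q T w s with ha
  set c : ℝ := w / q with hc
  have hq0 : (0 : ℝ) < q := by positivity
  have hq2 : (2 : ℝ) ≤ q := by exact_mod_cast hq
  have hc0 : 0 < c := by positivity
  have hcw : c * q = w := by rw [hc]; field_simp
  have hc1 : c ≤ 1 := by nlinarith
  set D : ℝ := ∑ k, (c * s k) ^ 2 with hD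
  set V : ℝ := T ^ 2 + D with hVdef
  have haa : a ⬝ᵥ a = V := by
    simp only [ha, formN, dotProduct, Fin.sum_univ_succ, Fin.cons_zero, Fin.cons_succ, hVdef, hD]
    simp only [sq, hc]
  have hDc : D ≤ c := by
    have : D ≤ ∑ _k : Fin q, c ^ 2 := by
      refine Finset.sum_le_sum fun k _ => ?_
      have := hs0 k; have := hs1 k
      exact pow_le_pow_left₀ (by positivity) (by nlinarith) 2
    rw [Finset.sum_const, Finset.card_univ, Fintype.card_fin, nsmul_eq_mul] at this
    nlinarith
  obtain ⟨k₁, hk₁⟩ : ∃ k : Fin q, k ≠ j := by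
    have : Nontrivial (Fin q) := Fin.nontrivial_iff_two_le.2 hq
    exact exists_ne j
  have hcD : c ^ 2 ≤ D := by
    have := Finset.single_le_sum (f := fun k => (c * s k) ^ 2) (fun k _ => sq_nonneg _)
      (Finset.mem_univ k₁)
    simpa [hsj k₁ hk₁] using this
  have hcV : c ^ 2 < V := by nlinarith [sq_pos_of_pos hT]
  have hV : 0 < V := by nlinarith [sq_pos_of_pos hT]
  set e : {k : Fin q // k ≠ j} → Fin (q + 1) → ℝ :=
    fun k => Pi.single k.1.succ 1 - (c / V) • a with he
  have hak : ∀ k : {k : Fin q // k ≠ j}, a k.1.succ = c := by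
    intro k; simp [ha, formN, hsj k.1 k.2, hc]
  have horth : ∀ k, a ⬝ᵥ e k = 0 := by
    intro k
    simp only [he, dotProduct_sub, dotProduct_smul, haa, smul_eq_mul, dotProduct_single, hak]
    field_simp; ring
  have hee : ∀ k l, e k ⬝ᵥ e l = (if k = l then 1 else 0) - c ^ 2 / V := by
    intro k l
    have h1 : e k ⬝ᵥ e l = (Pi.single k.1.succ 1 : Fin (q + 1) → ℝ) ⬝ᵥ e l := by
      have : e k = Pi.single k.1.succ 1 - (c / V) • a := rfl
      rw [this, sub_dotProduct, smul_dotProduct, horth, smul_zero, sub_zero]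
    rw [h1]
    simp only [he, dotProduct_sub, dotProduct_smul, single_dotProduct, hak, smul_eq_mul, one_mul,
      Pi.single_apply, Fin.succ_inj, Subtype.ext_iff]
    congr 1
    ring
  set r : ℝ := √(1 - c ^ 2 / V) with hr
  have hr2 : 0 < 1 - c ^ 2 / V := by
    rw [sub_pos, div_lt_one hV]; exact hcV
  have hr0 : 0 < r := Real.sqrt_pos.2 hr2
  have hev : ∀ k, e k ⬝ᵥ e k = r ^ 2 := by
    intro k; rw [hee, if_pos rfl, hr, Real.sq_sqrt hr2.le]
  have hex : ∀ (k : {k : Fin q // k ≠ j}) (x : Fin (q + 1) → ℝ),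
      e k ⬝ᵥ x = x k.1.succ - c / V * (a ⬝ᵥ x) := by
    intro k x
    simp only [he, sub_dotProduct, smul_dotProduct, single_dotProduct, one_mul, smul_eq_mul]
  set S : Set (ℝ × ({k : Fin q // k ≠ j} → ℝ)) :=
    {z | 0 < z.1 ∧ ∀ k, z.2 k ≤ (θ k - c / V) * z.1} with hS
  have mS : MeasurableSet S := by
    have : S = {z | 0 < z.1} ∩ ⋂ k : {k : Fin q // k ≠ j}, {z | z.2 k ≤ (θ k - c / V) * z.1} := by
      ext z; simp [hS]
    rw [this]
    exact (measurableSet_lt measurable_const measurable_fst).inter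
      (MeasurableSet.iInter fun k => measurableSet_le (by fun_prop) (by fun_prop))
  have eS : {g | 0 < a ⬝ᵥ g ∧ ∀ k : {k : Fin q // k ≠ j}, g k.1.succ ≤ θ k * (a ⬝ᵥ g)}
      = {g | (a ⬝ᵥ g, fun k => e k ⬝ᵥ g) ∈ S} := by
    ext g
    simp only [mem_ofPred_eq, hS, hex]
    refine and_congr_right fun _ => forall_congr' fun k => ?_
    constructor <;> intro h <;> linarith
  have hcard : (Finset.univ : Finset {k : Fin q // k ≠ j}).card = q - 1 := by
    rw [Finset.card_univ, Fintype.card_subtype_compl]; simp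
  have mPhi : Measurable Phi := Phi_mono.measurable
  -- the conditional probability given that the form `a` takes the value `t`
  have hcond : ∀ t, stdPi (Fin (q + 1)) {x | (t, fun k => e k ⬝ᵥ x) ∈ S} ≤
      (Ioi 0).indicator (fun t => ENNReal.ofReal (Phi ((1 - c / V) / r * t) ^ (q - 1))) t := by
    intro t
    by_cases ht : 0 < t
    · rw [indicator_of_mem (by exact ht)]
      have hsub : {x | (t, fun k => e k ⬝ᵥ x) ∈ S} ⊆
          {x : Fin (q + 1) → ℝ | ∀ k ∈ Finset.univ, e k ⬝ᵥ x ≤ (θ k - c / V) * t} :=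
        fun x hx k _ => hx.2 k
      refine (measure_mono hsub).trans ?_
      refine (stdPi_orthant_le e _ (fun k => by rw [hev]; positivity) (fun k l hkl => ?_)
        Finset.univ).trans ?_
      · rw [hee, if_neg hkl, zero_sub, neg_nonpos]; positivity
      · have h1 : ∀ k, stdPi (Fin (q + 1)) {x | e k ⬝ᵥ x ≤ (θ k - c / V) * t}
            = ENNReal.ofReal (Phi ((θ k - c / V) * t / r)) := by
          intro k
          rw [← gaussianReal_Iic_scale hr0, ← hev k, ← map_dot,
            Measure.map_apply (measurable_dot _) measurableSet_Iic]
          rfl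
        simp only [h1]
        rw [← ENNReal.ofReal_prod_of_nonneg fun k _ => Phi_nonneg _]
        refine ENNReal.ofReal_le_ofReal ?_
        have h2 := prod_Phi_le (Finset.univ : Finset {k : Fin q // k ≠ j})
          (fun k => (θ k - c / V) * t / r) ((1 - c / V) / r * t) ?_
        · rwa [hcard] at h2
        · rw [hcard, Nat.cast_sub (by omega), Nat.cast_one]
          rw [← Finset.sum_div, ← Finset.sum_mul, Finset.sum_sub_distrib, Finset.sum_const, hcard,
            nsmul_eq_mul, Nat.cast_sub (by omega), Nat.cast_one]
          have : ((q : ℝ) - 1) * ((1 - c / V) / r * t)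
              = (((q : ℝ) - 1) - ((q : ℝ) - 1) * (c / V)) * t / r := by ring
          rw [this]
          gcongr
    · rw [indicator_of_notMem (by exact ht)]
      simp [hS, ht]
  rw [eS, stdPi_indep_apply a e horth S mS]
  refine (lintegral_mono hcond).trans ?_
  rw [map_dot, haa, gaussianReal_eq_map hV.le, lintegral_map, ← lintegral_indicator]
  rotate_left
  · exact measurableSet_Ioi
  · refine Measurable.indicator ?_ measurableSet_Ioi
    exact ENNReal.measurable_ofReal.comp ((mPhi.comp (by fun_prop)).pow_const _)
  · fun_prop
  refine lintegral_mono fun z => ?_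
  have hν : 0 < √V := Real.sqrt_pos.2 hV
  by_cases hz : 0 < z
  · rw [indicator_of_mem (by exact mul_pos hν hz), indicator_of_mem (by exact hz)]
    refine ENNReal.ofReal_le_ofReal (pow_le_pow_left₀ (Phi_nonneg _) (Phi_mono ?_) _)
    rw [← mul_assoc]
    refine mul_le_mul_of_nonneg_right ?_ hz.le
    have h3 := ratio_le hT hc0 hc1 hDc hcV
    have h4 : √(V - c ^ 2) = √V * r := by
      rw [hr, ← Real.sqrt_mul hV.le]; congr 1; field_simp
    rw [← hVdef, h4] at h3
    refine le_trans (le_of_eq ?_) h3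
    have h5 : √V * √V = V := Real.mul_self_sqrt hV.le
    field_simp
    rw [sq, h5, mul_comm]
  · rw [indicator_of_notMem, indicator_of_notMem (by exact hz)]
    intro h
    exact hz (pos_of_mul_pos_right (by exact h) hν.le)

/-! ### The Gaussian limit experiment -/

/-- The set of data vectors at which the test rejects, described by the linear inequalities
`x_{0,k} ≤ (1 - w) x_1 + w x̄_0`. -/
def rejSet (q : ℕ) (w : ℝ) : Set (Fin (q + 1) → ℝ) :=
  {x | ∀ k : Fin q, x k.succ ≤ (1 - w) * x 0 + w * xbar q x}

/-- The vector of standard deviations `(σ, σ_1, …, σ_q)`. -/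
def sdVec {q : ℕ} (σ : ℝ) (σs : Fin q → ℝ) : Fin (q + 1) → ℝ := Fin.cons σ σs

/-- Weight that shrinks the standard deviation `σs k` to at most `σlow`. -/
def shrink {q : ℕ} (σlow : ℝ) (σs : Fin q → ℝ) (k : Fin q) : ℝ := σlow / max (σs k) σlow

section Inclusion

variable {q : ℕ} {σs : Fin q → ℝ} {σ σlow σhigh w : ℝ}

lemma shrink_pos (hlow : 0 < σlow) (k : Fin q) : 0 < shrink σlow σs k :=
  div_pos hlow (lt_max_of_lt_right hlow)

lemma shrink_le_one (hlow : 0 < σlow) (k : Fin q) : shrink σlow σs k ≤ 1 :=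
  (div_le_one (lt_max_of_lt_right hlow)).2 (le_max_right _ _)

lemma shrink_mul (hlow : 0 < σlow) (k : Fin q) :
    shrink σlow σs k * σs k = σlow * (min (σs k) σlow / σlow) := by
  have h : 0 < max (σs k) σlow := lt_max_of_lt_right hlow
  have e := max_mul_min (σs k) σlow
  rw [shrink, mul_div_cancel₀ _ hlow.ne', div_mul_eq_mul_div, div_eq_iff h.ne']
  linarith

/-- The common denominator of the rescaling coefficients `θ_k`. -/
def shrinkDen (w σlow : ℝ) (σs : Fin q → ℝ) : ℝ := 1 - w / q * ∑ k, (1 - shrink σlow σs k)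

lemma shrinkDen_eq (hq : 2 ≤ q) :
    shrinkDen w σlow σs = 1 - w + w / q * ∑ k, shrink σlow σs k := by
  have : (q : ℝ) ≠ 0 := by positivity
  simp only [shrinkDen, Finset.sum_sub_distrib, Finset.sum_const, Finset.card_univ,
    Fintype.card_fin, nsmul_eq_mul, mul_one]
  field_simp
  ring

lemma shrinkDen_pos (hq : 2 ≤ q) (hlow : 0 < σlow) (hw0 : 0 < w) (hw1 : w < 1) :
    0 < shrinkDen w σlow σs := by
  rw [shrinkDen_eq hq]
  have : 0 ≤ ∑ k, shrink σlow σs k := Finset.sum_nonneg fun k _ => (shrink_pos hlow k).le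
  have : 0 ≤ w / q * ∑ k, shrink σlow σs k := by positivity
  linarith

/-- When `σs j` is the smallest standard deviation, the rescaling coefficients average to at most
one over the other indices. -/
lemma sum_theta_le (hq : 2 ≤ q) (hlow : 0 < σlow) (hw0 : 0 < w) (hw1 : w < 1) (j : Fin q)
    (hj : ∀ k, σs j ≤ σs k) :
    ∑ k : {k : Fin q // k ≠ j}, shrink σlow σs k / shrinkDen w σlow σs ≤ (q : ℝ) - 1 := by
  have hg := shrinkDen_pos (σs := σs) hq hlow hw0 hw1
  rw [← Finset.sum_div, div_le_iff₀ hg, shrinkDen_eq hq]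
  set Λ : ℝ := ∑ k, shrink σlow σs k with hΛ
  have h1 : Λ = shrink σlow σs j + ∑ k : {k : Fin q // k ≠ j}, shrink σlow σs k :=
    Fintype.sum_eq_add_sum_subtype_ne _ j
  have hq2 : (2 : ℝ) ≤ q := by exact_mod_cast hq
  have hq0 : (0 : ℝ) < q := by linarith
  have h2 : Λ ≤ q * shrink σlow σs j := by
    have : Λ ≤ ∑ _k : Fin q, shrink σlow σs j :=
      Finset.sum_le_sum fun k _ => div_le_div_of_nonneg_left hlow.le (lt_max_of_lt_right hlow)
        (max_le_max_right _ (hj k))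
    simpa using this
  have h3 : Λ ≤ q := by
    have : Λ ≤ ∑ _k : Fin q, (1 : ℝ) := Finset.sum_le_sum fun k _ => shrink_le_one hlow k
    simpa using this
  set η : ℝ := Λ / q with hη
  have hΛη : Λ = q * η := by rw [hη]; field_simp
  have hη1 : η ≤ 1 := by rw [hη, div_le_one hq0]; exact h3
  have hηj : η ≤ shrink σlow σs j := by
    rw [hη, div_le_iff₀ hq0]; linarith
  have e : w / q * Λ = w * η := by rw [hη]; ring
  rw [e]
  have h4 : η ≤ 1 - w + w * η := by nlinarith
  have h5 : ((q : ℝ) - 1) * η ≤ ((q : ℝ) - 1) * (1 - w + w * η) :=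
    mul_le_mul_of_nonneg_left h4 (by linarith)
  linarith

/-- On the rejection event either all `G_k` with `k ≠ j` are nonpositive, or the form `N` is
positive and dominates the `G_k` after rescaling. -/
lemma rejSet_inclusion (hq : 2 ≤ q) (hσ : 0 < σ) (hlow : 0 < σlow)
    (hσh : σ ≤ σhigh) (hw0 : 0 < w) (hw1 : w < 1) (j : Fin q)
    (hj : ∀ k, k ≠ j → σlow ≤ σs k) (g : Fin (q + 1) → ℝ)
    (hg : (fun i => sdVec σ σs i * g i) ∈ rejSet q w) :
    (∀ k : {k : Fin q // k ≠ j}, g k.1.succ ≤ 0) ∨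
    (0 < formN q ((1 - w) * (σhigh / σlow)) w (fun k => min (σs k) σlow / σlow) ⬝ᵥ g ∧
      ∀ k : {k : Fin q // k ≠ j}, g k.1.succ ≤ shrink σlow σs k / shrinkDen w σlow σs *
        (formN q ((1 - w) * (σhigh / σlow)) w (fun k => min (σs k) σlow / σlow) ⬝ᵥ g)) := by
  set N0 := formN q ((1 - w) * (σhigh / σlow)) w (fun k => min (σs k) σlow / σlow) ⬝ᵥ g with hN0
  have hq0 : (0 : ℝ) < q := by positivity
  have hγ := shrinkDen_pos (σs := σs) hq hlow hw0 hw1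
  set γ := shrinkDen w σlow σs with hγdef
  set X : Fin q → ℝ := fun k => σs k * g k.succ with hX
  have hA : ∀ k, X k ≤ (1 - w) * (σ * g 0) + w * ((∑ k, X k) / q) := by
    intro k
    have := hg k
    simpa [sdVec, xbar, hX] using this
  have hpos : ∀ k : {k : Fin q // k ≠ j}, 0 < σs k := fun k => hlow.trans_le (hj k.1 k.2)
  rcases le_or_gt (g 0) 0 with hZ | hZ
  · left
    set m : ℝ := (∑ k, X k) / q with hm
    have hZ' : (1 - w) * (σ * g 0) ≤ 0 :=
      mul_nonpos_of_nonneg_of_nonpos (by linarith) (mul_nonpos_of_nonneg_of_nonpos hσ.le hZ)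
    have hmle : m ≤ w * m := by
      have : ∑ k, X k ≤ ∑ _k : Fin q, w * m := Finset.sum_le_sum fun k _ => by linarith [hA k]
      rw [Finset.sum_const, Finset.card_univ, Fintype.card_fin, nsmul_eq_mul] at this
      rw [hm, div_le_iff₀ hq0, ← hm]; linarith
    have hm0 : m ≤ 0 := by nlinarith
    intro k
    have h1 : σs k * g k.1.succ ≤ 0 := (hA k).trans (by nlinarith)
    exact nonpos_of_mul_nonpos_right h1 (hpos k)
  · set N : ℝ := (1 - w) * (σhigh * g 0) + w / q * ∑ k, X k with hN
    have hXN : ∀ k, X k ≤ N := by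
      intro k
      refine (hA k).trans ?_
      have : (1 - w) * (σ * g 0) ≤ (1 - w) * (σhigh * g 0) :=
        mul_le_mul_of_nonneg_left (mul_le_mul_of_nonneg_right hσh hZ.le) (by linarith)
      have e : w * ((∑ k, X k) / q) = w / q * ∑ k, X k := by ring
      rw [hN, ← e]; linarith
    have hN0' : σlow * N0 = (1 - w) * (σhigh * g 0) + w / q * ∑ k, shrink σlow σs k * X k := by
      have e1 : ∀ k, shrink σlow σs k * X k
          = σlow * (min (σs k) σlow / σlow * g k.succ) := by
        intro k
        rw [hX, ← mul_assoc, ← mul_assoc, shrink_mul hlow]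
      simp only [e1]
      rw [hN0, formN, dotProduct, Fin.sum_univ_succ, ← Finset.mul_sum]
      simp only [Fin.cons_zero, Fin.cons_succ, mul_assoc, ← Finset.mul_sum]
      field_simp
    have hγN : γ * N ≤ σlow * N0 := by
      have h1 : ∑ k, (1 - shrink σlow σs k) * X k ≤ ∑ k, (1 - shrink σlow σs k) * N :=
        Finset.sum_le_sum fun k _ => mul_le_mul_of_nonneg_left (hXN k)
          (sub_nonneg.2 (shrink_le_one hlow k))
      have h2 : ∑ k, (1 - shrink σlow σs k) * X k
          = ∑ k, X k - ∑ k, shrink σlow σs k * X k := by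
        rw [← Finset.sum_sub_distrib]
        exact Finset.sum_congr rfl fun k _ => by ring
      rw [← Finset.sum_mul, h2] at h1
      have h3 := mul_le_mul_of_nonneg_left h1 (div_nonneg hw0.le hq0.le)
      rw [hN0', hγdef, shrinkDen]
      have h4 : N = (1 - w) * (σhigh * g 0) + w / q * ∑ k, X k := hN
      linear_combination h3 + h4
    have hGk : ∀ k : {k : Fin q // k ≠ j}, g k.1.succ ≤ shrink σlow σs k / γ * N0 := by
      intro k
      have h1 : γ * (σs k * g k.1.succ) ≤ σlow * N0 :=
        (mul_le_mul_of_nonneg_left (hXN k) hγ.le).trans hγN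
      have h2 : shrink σlow σs k = σlow / σs k := by rw [shrink, max_eq_left (hj k.1 k.2)]
      rw [h2, div_div, div_mul_eq_mul_div, le_div_iff₀ (mul_pos (hpos k) hγ)]
      linarith
    rcases le_or_gt N0 0 with h0 | h0
    · left
      intro k
      exact (hGk k).trans (mul_nonpos_of_nonneg_of_nonpos
        (div_nonneg (shrink_pos hlow _).le hγ.le) h0)
    · exact Or.inr ⟨h0, hGk⟩

end Inclusion

lemma stdPi_nonpos_le (q : ℕ) (j : Fin q) :
    stdPi (Fin (q + 1)) {g | ∀ k : {k : Fin q // k ≠ j}, g k.1.succ ≤ 0}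
      ≤ ENNReal.ofReal ((1 / 2) ^ (q - 1)) := by
  classical
  have hcard : (Finset.univ : Finset {k : Fin q // k ≠ j}).card = q - 1 := by
    rw [Finset.card_univ, Fintype.card_subtype_compl]; simp
  set b : {k : Fin q // k ≠ j} → Fin (q + 1) → ℝ := fun k => Pi.single k.1.succ 1 with hb
  have hbb : ∀ k l, b k ⬝ᵥ b l = if k = l then 1 else 0 := by
    intro k l
    simp [hb, Pi.single_apply, Subtype.ext_iff, eq_comm]
  have h := stdPi_orthant_le b (fun _ => 0) (fun k => by simp [hbb])
    (fun k l hkl => by simp [hbb, hkl]) Finset.univ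
  have h1 : ∀ k, stdPi (Fin (q + 1)) {x | b k ⬝ᵥ x ≤ 0} = ENNReal.ofReal (1 / 2) := by
    intro k
    rw [← Phi_zero, ofReal_Phi]
    have := map_dot (b k)
    rw [hbb, if_pos rfl, Real.toNNReal_one] at this
    rw [← this, Measure.map_apply (measurable_dot _) measurableSet_Iic]
    rfl
  simp only [h1, Finset.prod_const, hcard] at h
  rw [ENNReal.ofReal_pow (by norm_num)]
  refine le_trans (measure_mono ?_) h
  intro x hx k _
  simpa [hb] using hx k

lemma lintegral_eq_xi (q : ℕ) (T : ℝ) :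
    ∫⁻ z in Ioi 0, ENNReal.ofReal (Phi (T * z) ^ (q - 1)) ∂(gaussianReal 0 1)
      = ENNReal.ofReal (∫ y in Ioi (0 : ℝ), Phi (T * y) ^ (q - 1) * stdNormalPDF y) := by
  have mPhi : Measurable (fun z => Phi (T * z) ^ (q - 1)) :=
    (Phi_mono.measurable.comp (by fun_prop)).pow_const _
  rw [ofReal_integral_eq_lintegral_ofReal]
  · rw [gaussianReal_of_var_ne_zero _ one_ne_zero, restrict_withDensity measurableSet_Ioi,
      lintegral_withDensity_eq_lintegral_mul _ (measurable_gaussianPDF 0 1) mPhi.ennreal_ofReal]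
    refine lintegral_congr fun z => ?_
    rw [Pi.mul_apply, ENNReal.ofReal_mul (pow_nonneg (Phi_nonneg _) _), mul_comm]
    rfl
  · refine Integrable.mono' (integrable_gaussianPDFReal 0 1).integrableOn
      (mPhi.mul (measurable_gaussianPDFReal 0 1)).aestronglyMeasurable (ae_of_all _ fun z => ?_)
    have h0 := gaussianPDFReal_nonneg 0 1 z
    rw [Real.norm_eq_abs, stdNormalPDF,
      abs_of_nonneg (mul_nonneg (pow_nonneg (Phi_nonneg _) _) h0)]
    exact mul_le_of_le_one_left h0 (pow_le_one₀ (Phi_nonneg _) (Phi_le_one _))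
  · exact ae_of_all _ fun z => mul_nonneg (pow_nonneg (Phi_nonneg _) _)
      (gaussianPDFReal_nonneg 0 1 z)

lemma half_pow_le_sInf (q : ℕ) (w : ℝ) (hw0 : 0 < w) :
    (1 / 2 : ℝ) ^ (q - 1) ≤ sInf ((fun t : ℝ => Phi (Real.sqrt ((q : ℝ) - 1) * w * t) ^ (q - 1)
        + 2 * Phi (-(q : ℝ) * t)) '' Set.Ioi 0) := by
  refine le_csInf (Set.Nonempty.image _ ⟨1, by simp⟩) ?_
  rintro _ ⟨t, ht, rfl⟩
  have ht0 : 0 < t := ht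
  have h1 : (1 / 2 : ℝ) ≤ Phi (Real.sqrt ((q : ℝ) - 1) * w * t) := by
    rw [← Phi_zero]; exact Phi_mono (by positivity)
  have h2 := pow_le_pow_left₀ (by norm_num) h1 (q - 1)
  have h3 := Phi_nonneg (-(q : ℝ) * t)
  simp only
  linarith

/-- The size bound in the Gaussian limit experiment. -/
lemma stdPi_rejSet_le {q : ℕ} (hq : 2 ≤ q) {σ σlow σhigh w : ℝ} {σs : Fin q → ℝ} (hσ : 0 < σ)
    (hσs : ∀ k, 0 ≤ σs k) (hlow : 0 < σlow) (hlh : σlow ≤ σhigh) (hσh : σ ≤ σhigh)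
    (hw0 : 0 < w) (hw1 : w < 1) (hmost : ∃ j : Fin q, ∀ k, k ≠ j → σlow ≤ σs k) :
    stdPi (Fin (q + 1)) {g | (fun i => sdVec σ σs i * g i) ∈ rejSet q w}
      ≤ ENNReal.ofReal (xiBound q w (σhigh / σlow)) := by
  have : Nonempty (Fin q) := ⟨⟨0, by omega⟩⟩
  obtain ⟨j, hjmin⟩ := Finite.exists_min σs
  have hj : ∀ k, k ≠ j → σlow ≤ σs k := by
    obtain ⟨i, hi⟩ := hmost
    intro k hk
    by_cases hki : k = i
    · subst hki
      exact (hi j fun h => hk h.symm).trans (hjmin k)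
    · exact hi k hki
  set T := (1 - w) * (σhigh / σlow) with hT
  have hT0 : 0 < T := mul_pos (by linarith) (div_pos (hlow.trans_le hlh) hlow)
  have hcore := core_bound q hq j T w hT0 hw0 hw1 (fun k => min (σs k) σlow / σlow)
    (fun k => div_nonneg (le_min (hσs k) hlow.le) hlow.le)
    (fun k => (div_le_one hlow).2 (min_le_right _ _))
    (fun k hk => by rw [min_eq_right (hj k hk), div_self hlow.ne'])
    (fun k => shrink σlow σs k / shrinkDen w σlow σs) (sum_theta_le hq hlow hw0 hw1 j hjmin)
  rw [lintegral_eq_xi] at hcore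
  have hI : 0 ≤ ∫ y in Ioi (0 : ℝ), Phi (T * y) ^ (q - 1) * stdNormalPDF y :=
    setIntegral_nonneg measurableSet_Ioi fun y _ =>
      mul_nonneg (pow_nonneg (Phi_nonneg _) _) (gaussianPDFReal_nonneg 0 1 y)
  calc stdPi (Fin (q + 1)) {g | (fun i => sdVec σ σs i * g i) ∈ rejSet q w}
      ≤ _ := measure_mono fun g hg => rejSet_inclusion hq hσ hlow hσh hw0 hw1 j hj g hg
    _ ≤ _ := measure_union_le _ _
    _ ≤ _ := add_le_add (stdPi_nonpos_le q j) hcore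
    _ = ENNReal.ofReal ((1 / 2) ^ (q - 1)
          + ∫ y in Ioi (0 : ℝ), Phi (T * y) ^ (q - 1) * stdNormalPDF y) :=
        (ENNReal.ofReal_add (by positivity) hI).symm
    _ ≤ _ := by
        refine ENNReal.ofReal_le_ofReal ?_
        have h1 := half_pow_le_sInf q w hw0
        have h2 : (0 : ℝ) ≤ (1 / 2) ^ (q + 1) := by positivity
        rw [xiBound, ← hT]
        linarith

/-! ### The rejection event of the rearrangement test -/

lemma Tstat_eq (q : ℕ) (s : Fin (q + 2) → ℝ) :
    Tstat q s = (s 0 + s 1) * (1 / 2 + 1 / q) - (∑ i, s i) / q := by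
  have h : ∑ i, s i = s 0 + (s 1 + ∑ k : Fin q, s ⟨k.val + 2, by have := k.isLt; omega⟩) := by
    rw [Fin.sum_univ_succ, Fin.sum_univ_succ]
    rfl
  rw [h, Tstat]
  ring

/-- The permutation that sorts `s` in decreasing order. -/
def rearrPerm {n : ℕ} (s : Fin n → ℝ) : Equiv.Perm (Fin n) := Fin.revPerm.trans (Tuple.sort s)

lemma rearr_apply {n : ℕ} (s : Fin n → ℝ) (i : Fin n) : rearr s i = s (rearrPerm s i) := rfl

lemma rearr_antitone {n : ℕ} (s : Fin n → ℝ) : Antitone (rearr s) := fun _ _ h =>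
  Tuple.monotone_sort s (Fin.rev_le_rev.2 h)

lemma pair_le_rearr {n : ℕ} (s : Fin (n + 2) → ℝ) {a b : Fin (n + 2)} (hab : a ≠ b) :
    s a + s b ≤ rearr s 0 + rearr s 1 := by
  have key : ∀ a b : Fin (n + 2), a < b → rearr s a + rearr s b ≤ rearr s 0 + rearr s 1 := by
    intro a b h
    refine add_le_add (rearr_antitone s (Fin.zero_le a)) (rearr_antitone s ?_)
    rw [Fin.le_def, Fin.val_one]
    have : a.val < b.val := h
    omega
  have e : ∀ a, s a = rearr s ((rearrPerm s).symm a) := by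
    intro a; rw [rearr_apply, Equiv.apply_symm_apply]
  rw [e a, e b]
  rcases lt_or_gt_of_ne (fun h => hab ((rearrPerm s).symm.injective h)) with h | h
  · exact key _ _ h
  · rw [add_comm]; exact key _ _ h

lemma Tstat_eq_rearr_iff {q : ℕ} (hq : 2 ≤ q) (s : Fin (q + 2) → ℝ) :
    Tstat q s = Tstat q (rearr s) ↔ s 0 + s 1 = rearr s 0 + rearr s 1 := by
  have h : ∑ i, rearr s i = ∑ i, s i := Equiv.sum_comp (rearrPerm s) s
  have hq0 : (0 : ℝ) < q := by positivity
  rw [Tstat_eq, Tstat_eq, h, sub_left_inj, mul_left_inj' (by positivity)]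

/-- The test rejects exactly when every control coordinate lies below `(1 - w) x_1 + w x̄_0`. -/
lemma phiTest_eq_one_iff {q : ℕ} (hq : 2 ≤ q) {w : ℝ} (hw0 : 0 < w) (hw1 : w < 1)
    (x : Fin (q + 1) → ℝ) :
    Tstat q (Svec q w x) = Tstat q (rearr (Svec q w x)) ↔ x ∈ rejSet q w := by
  rw [Tstat_eq_rearr_iff hq]
  have hq0 : (0 : ℝ) < q := by positivity
  set s := Svec q w x with hs
  set d : ℝ := x 0 - xbar q x with hd
  have s0 : s 0 = (1 + w) * d := by simp [hs, Svec, hd]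
  have s1 : s 1 = (1 - w) * d := by simp [hs, Svec, hd]
  have sk : ∀ k : Fin q, s k.succ.succ = x k.succ - xbar q x := by
    intro k
    simp only [hs, Svec, Fin.val_succ]
    rfl
  have hmem : x ∈ rejSet q w ↔ ∀ k : Fin q, s k.succ.succ ≤ s 1 := by
    simp only [rejSet, mem_ofPred_eq, sk, s1, hd]
    refine forall_congr' fun k => ?_
    constructor <;> intro h <;> linarith
  rw [hmem]
  constructor
  · intro h k
    have := pair_le_rearr s (a := 0) (b := k.succ.succ) (Fin.succ_ne_zero _).symm
    linarith
  · intro h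
    -- the recentered controls sum to zero, hence `x_1 - x̄_0` is nonnegative
    have hd0 : 0 ≤ d := by
      have h1 : ∑ k : Fin q, s k.succ.succ ≤ ∑ _k : Fin q, s 1 := Finset.sum_le_sum fun k _ => h k
      have h2 : ∑ k : Fin q, s k.succ.succ = 0 := by
        simp only [sk, Finset.sum_sub_distrib, Finset.sum_const, Finset.card_univ,
          Fintype.card_fin, nsmul_eq_mul, xbar]
        field_simp
        ring
      rw [h2, Finset.sum_const, Finset.card_univ, Fintype.card_fin, nsmul_eq_mul, s1] at h1
      have h3 := nonneg_of_mul_nonneg_right h1 hq0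
      exact nonneg_of_mul_nonneg_right h3 (by linarith)
    have h01 : s 1 ≤ s 0 := by rw [s0, s1]; nlinarith
    have hle1 : ∀ i, i ≠ 0 → s i ≤ s 1 := by
      intro i hi
      obtain ⟨i, rfl⟩ := Fin.exists_succ_eq.2 hi
      rcases Fin.eq_zero_or_eq_succ i with rfl | ⟨k, rfl⟩
      · exact le_rfl
      · exact h k
    have hle0 : ∀ i, s i ≤ s 0 := by
      intro i
      by_cases hi : i = 0
      · rw [hi]
      · exact (hle1 i hi).trans h01
    refine le_antisymm (pair_le_rearr s (by simp)) ?_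
    rw [rearr_apply, rearr_apply]
    have hne : rearrPerm s 0 ≠ rearrPerm s 1 := fun h => by
      simpa using (rearrPerm s).injective h
    by_cases ha : rearrPerm s 0 = 0
    · have hb : rearrPerm s 1 ≠ 0 := fun hb => hne (ha.trans hb.symm)
      rw [ha]
      linarith [hle1 _ hb]
    · linarith [hle1 _ ha, hle0 (rearrPerm s 1)]

lemma phiTest_eq_indicator {q : ℕ} (hq : 2 ≤ q) {w : ℝ} (hw0 : 0 < w) (hw1 : w < 1)
    (x : Fin (q + 1) → ℝ) : phiTest q x w = (rejSet q w).indicator 1 x := by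
  classical
  rw [phiTest, indicator_apply]
  simp only [phiTest_eq_one_iff hq hw0 hw1, Pi.one_apply]

lemma rejSet_affine {q : ℕ} (hq : 2 ≤ q) {w r : ℝ} (hr : 0 < r) (θ : ℝ) (x : Fin (q + 1) → ℝ) :
    (fun i => r * (x i - θ)) ∈ rejSet q w ↔ x ∈ rejSet q w := by
  have hq0 : (0 : ℝ) < q := by positivity
  have e : xbar q (fun i => r * (x i - θ)) = r * (xbar q x - θ) := by
    simp only [xbar, ← Finset.mul_sum, Finset.sum_sub_distrib, Finset.sum_const,
      Finset.card_univ, Fintype.card_fin, nsmul_eq_mul]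
    field_simp
  simp only [rejSet, mem_ofPred_eq, e]
  refine forall_congr' fun k => ?_
  have h : (1 - w) * (r * (x 0 - θ)) + w * (r * (xbar q x - θ))
      = r * ((1 - w) * x 0 + w * xbar q x - θ) := by ring
  rw [h, mul_le_mul_iff_right₀ hr, sub_le_sub_iff_right]

/-! ### Passage to the limit -/

lemma continuous_xbar (q : ℕ) : Continuous (xbar q) := by
  unfold xbar; fun_prop

lemma isClosed_rejSet (q : ℕ) (w : ℝ) : IsClosed (rejSet q w) := by
  have h := continuous_xbar q
  have e : rejSet q w = ⋂ k : Fin q, {x | x k.succ ≤ (1 - w) * x 0 + w * xbar q x} := by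
    ext x; simp [rejSet]
  rw [e]
  exact isClosed_iInter fun k => isClosed_le (by fun_prop) (by fun_prop)

lemma frontier_rejSet_subset (q : ℕ) (w : ℝ) :
    frontier (rejSet q w) ⊆ ⋃ k : Fin q, {x | x k.succ = (1 - w) * x 0 + w * xbar q x} := by
  have h := continuous_xbar q
  rw [(isClosed_rejSet q w).frontier_eq]
  rintro x ⟨hx, hxi⟩
  by_contra hne
  simp only [mem_iUnion, mem_ofPred_eq, not_exists] at hne
  refine hxi (mem_interior.2 ⟨⋂ k : Fin q, {x | x k.succ < (1 - w) * x 0 + w * xbar q x}, ?_,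
    isOpen_iInter_of_finite fun k => isOpen_lt (by fun_prop) (by fun_prop), ?_⟩)
  · intro y hy k
    exact le_of_lt (mem_iInter.1 hy k)
  · exact mem_iInter.2 fun k => lt_of_le_of_ne (hx k) (hne k)

lemma measurable_scale {q : ℕ} (σ : ℝ) (σs : Fin q → ℝ) :
    Measurable (fun (g : Fin (q + 1) → ℝ) i => sdVec σ σs i * g i) := by fun_prop

lemma pi_eq_map_stdPi {q : ℕ} (σ : ℝ) (σs : Fin q → ℝ) :
    Measure.pi (fun i : Fin (q + 1) => gaussianReal 0
        ((Fin.cons (σ ^ 2) (fun k => (σs k) ^ 2) : Fin (q + 1) → ℝ) i).toNNReal)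
      = (stdPi (Fin (q + 1))).map (fun g i => sdVec σ σs i * g i) := by
  have h : ∀ i, (gaussianReal 0 1).map (fun y => sdVec σ σs i * y) = gaussianReal 0
      ((Fin.cons (σ ^ 2) (fun k => (σs k) ^ 2) : Fin (q + 1) → ℝ) i).toNNReal := by
    intro i
    rw [gaussianReal_map_const_mul, mul_zero]
    congr 1
    ext
    refine Fin.cases ?_ (fun k => ?_) i <;> simp [sdVec, sq_nonneg]
  have (i : Fin (q + 1)) :
      SigmaFinite ((gaussianReal 0 1).map (fun y => sdVec σ σs i * y)) := by
    rw [h]; infer_instance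
  rw [Measure.pi_map_pi (f := fun i y => sdVec σ σs i * y) (fun i => by fun_prop)]
  simp only [h]

/-- The boundary of the rejection region is negligible because the treated coordinate enters every
boundary equation with the nonzero coefficient `(1 - w) σ`. -/
lemma stdPi_frontier_null {q : ℕ} {σ w : ℝ} (hσ : 0 < σ) (hw1 : w < 1) (σs : Fin q → ℝ) :
    stdPi (Fin (q + 1)) {g | (fun i => sdVec σ σs i * g i) ∈ frontier (rejSet q w)} = 0 := by
  have hk : ∀ k : Fin q, stdPi (Fin (q + 1)) {g : Fin (q + 1) → ℝ |
      sdVec σ σs k.succ * g k.succ = (1 - w) * (sdVec σ σs 0 * g 0)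
        + w * xbar q (fun i => sdVec σ σs i * g i)} = 0 := by
    intro k
    set b : Fin (q + 1) → ℝ := Fin.cons (-((1 - w) * σ))
      (fun l => (if l = k then 1 else 0) * σs l - w / q * σs l) with hb
    have hbb : 0 < b ⬝ᵥ b := by
      have h0 : b 0 * b 0 ≤ b ⬝ᵥ b :=
        Finset.single_le_sum (f := fun i => b i * b i) (fun i _ => mul_self_nonneg _)
          (Finset.mem_univ 0)
      have h1 : 0 < (1 - w) * σ := mul_pos (by linarith) hσ
      have h2 : b 0 = -((1 - w) * σ) := rfl
      rw [h2] at h0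
      nlinarith
    have hv : (b ⬝ᵥ b).toNNReal ≠ 0 := (Real.toNNReal_pos.2 hbb).ne'
    have : NullSingletonClass (gaussianReal 0 (b ⬝ᵥ b).toNNReal) :=
      nullSingletonClass_gaussianReal hv
    have h3 : stdPi (Fin (q + 1)) {g | b ⬝ᵥ g = 0} = 0 := by
      have h4 : gaussianReal 0 (b ⬝ᵥ b).toNNReal {0} = 0 := measure_singleton 0
      rw [← map_dot, Measure.map_apply (measurable_dot _) (measurableSet_singleton 0)] at h4
      exact h4
    refine measure_mono_null (fun g hg => ?_) h3
    have hg' : sdVec σ σs k.succ * g k.succ = (1 - w) * (sdVec σ σs 0 * g 0)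
        + w * xbar q (fun i => sdVec σ σs i * g i) := hg
    have e : b ⬝ᵥ g = -((1 - w) * σ) * g 0
        + (σs k * g k.succ - w / q * ∑ l, σs l * g l.succ) := by
      rw [dotProduct, Fin.sum_univ_succ]
      simp only [hb, Fin.cons_zero, Fin.cons_succ, sub_mul, Finset.sum_sub_distrib, mul_assoc,
        ← Finset.mul_sum]
      simp
    simp only [sdVec, Fin.cons_zero, Fin.cons_succ, xbar] at hg'
    rw [mem_ofPred_eq, e, hg']
    ring
  refine measure_mono_null (fun g hg => ?_) (measure_iUnion_null hk)
  obtain ⟨k, hkmem⟩ := mem_iUnion.1 (frontier_rejSet_subset q w hg)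
  exact mem_iUnion.2 ⟨k, hkmem⟩

/-- Theorem 2, asymptotic size with a single treated cluster. -/
theorem statement15 {Ω : Type*} [MeasurableSpace Ω] (P : Measure Ω) [IsProbabilityMeasure P]
    (q : ℕ) (hq : 2 ≤ q)
    (θhat : ℕ → Ω → Fin (q + 1) → ℝ) (hmeas : ∀ n, Measurable (θhat n))
    (θ0 : ℝ) (σ : ℝ) (hσ : 0 < σ) (σs : Fin q → ℝ) (hσs : ∀ k, 0 ≤ σs k)
    (hone : ∀ j k : Fin q, σs j = 0 → σs k = 0 → j = k)
    (σlow σhigh α w : ℝ) (hlow : 0 < σlow) (hlh : σlow ≤ σhigh) (hσh : σ ≤ σhigh)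
    (hmost : ∃ j : Fin q, ∀ k, k ≠ j → σlow ≤ σs k)
    (hw : w ∈ Set.Ioo (0 : ℝ) 1)
    (hξ : xiBound q w (σhigh / σlow) ≤ α)
    (hconv : ∀ f : BoundedContinuousFunction (Fin (q + 1) → ℝ) ℝ,
      Tendsto (fun n : ℕ => ∫ ω, f (fun i => Real.sqrt n * (θhat n ω i - θ0)) ∂P) atTop
        (nhds (∫ x, f x ∂(Measure.pi (fun i : Fin (q + 1) =>
          gaussianReal 0
            ((Fin.cons (σ ^ 2) (fun k => (σs k) ^ 2) : Fin (q + 1) → ℝ) i).toNNReal))))) :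
    ∃ L : ℝ, L ≤ α ∧
      Tendsto (fun n : ℕ => ∫ ω, phiTest q (θhat n ω) w ∂P) atTop (nhds L) := by
  obtain ⟨hw0, hw1⟩ := hw
  set A := rejSet q w with hA
  have mA : MeasurableSet A := (isClosed_rejSet q w).measurableSet
  set μ := Measure.pi (fun i : Fin (q + 1) => gaussianReal 0
    ((Fin.cons (σ ^ 2) (fun k => (σs k) ^ 2) : Fin (q + 1) → ℝ) i).toNNReal) with hμ
  have hμA : ∀ B, MeasurableSet B →
      μ B = stdPi (Fin (q + 1)) {g | (fun i => sdVec σ σs i * g i) ∈ B} := by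
    intro B hB
    rw [hμ, pi_eq_map_stdPi, Measure.map_apply (measurable_scale σ σs) hB]
    rfl
  have hX : ∀ n : ℕ, Measurable (fun ω i => Real.sqrt n * (θhat n ω i - θ0)) := by
    intro n
    have := hmeas n
    fun_prop
  set ν : ℕ → ProbabilityMeasure (Fin (q + 1) → ℝ) := fun n =>
    ⟨P.map (fun ω i => Real.sqrt n * (θhat n ω i - θ0)),
      Measure.isProbabilityMeasure_map (hX n).aemeasurable⟩ with hν
  have hweak : Tendsto ν atTop (nhds ⟨μ, inferInstance⟩) := by
    refine ProbabilityMeasure.tendsto_iff_forall_integral_tendsto.2 fun f => ?_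
    refine (hconv f).congr fun n => ?_
    exact (integral_map (hX n).aemeasurable f.continuous.aestronglyMeasurable).symm
  have hfr : μ (frontier A) = 0 := by
    rw [hμA _ isClosed_frontier.measurableSet]
    exact stdPi_frontier_null hσ hw1 σs
  have hlim := ProbabilityMeasure.tendsto_measure_of_null_frontier_of_tendsto' hweak hfr
  refine ⟨(μ A).toReal, ?_, ?_⟩
  · have h1 := stdPi_rejSet_le hq hσ hσs hlow hlh hσh hw0 hw1 hmost
    rw [← hμA A mA] at h1
    have h2 : 0 ≤ xiBound q w (σhigh / σlow) := by
      rw [xiBound]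
      have h3 := half_pow_le_sInf q w hw0
      have h4 : 0 ≤ ∫ y in Ioi (0 : ℝ),
          Phi ((1 - w) * (σhigh / σlow) * y) ^ (q - 1) * stdNormalPDF y :=
        setIntegral_nonneg measurableSet_Ioi fun y _ =>
          mul_nonneg (pow_nonneg (Phi_nonneg _) _) (gaussianPDFReal_nonneg 0 1 y)
      have h5 : (0 : ℝ) ≤ (1 / 2) ^ (q - 1) := by positivity
      have h6 : (0 : ℝ) ≤ (1 / 2) ^ (q + 1) := by positivity
      linarith
    exact (ENNReal.toReal_le_of_le_ofReal h2 h1).trans hξ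
  · have h1 := (ENNReal.tendsto_toReal (measure_ne_top μ A)).comp hlim
    refine h1.congr' ?_
    -- at `n = 0` the scaling factor vanishes, so the two sides agree only for positive `n`
    filter_upwards [eventually_gt_atTop 0] with n hn
    have hr : 0 < Real.sqrt n := Real.sqrt_pos.2 (by exact_mod_cast hn)
    simp only [Function.comp_apply, phiTest_eq_indicator hq hw0 hw1]
    have e1 : (fun ω => A.indicator (1 : (Fin (q + 1) → ℝ) → ℝ) (θhat n ω))
        = (θhat n ⁻¹' A).indicator 1 := rfl
    rw [e1, integral_indicator_one (hmeas n mA), measureReal_def]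
    congr 1
    have e2 : ((ν n : Measure (Fin (q + 1) → ℝ))) A
        = P ((fun ω i => Real.sqrt n * (θhat n ω i - θ0)) ⁻¹' A) :=
      Measure.map_apply (hX n) mA
    rw [e2]
    congr 1
    ext ω
    exact rejSet_affine hq hr θ0 (θhat n ω)

end
end
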